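/- If C_{p^n} × C_{p^n} (p prime, n ≥ 2) contains a regular partial difference set D, then the nonabelian group C_{p^n} ⋊_{p^{n-1}+1} C_{p^n} contains a regular partial difference set with the same parameters as D. -/

import Mathlib

section Defs

variable {G : Type*} [Group G]

/-- Number of ways to write `g = d₁ * d₂⁻¹` with `d₁, d₂ ∈ D`. -/
noncomputable def diffCount (D : Set G) (g : G) : ℕ :=
  Nat.card {p : D × D // (p.1 : G) * (p.2 : G)⁻¹ = g}

def IsPDS (D : Set G) (v k l μ : ℕ) : Prop :=
  Nat.card G = v ∧ Nat.card D = k ∧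
    (∀ g ∈ D, g ≠ 1 → diffCount D g = l) ∧
    (∀ g : G, g ∉ D → g ≠ 1 → diffCount D g = μ)

end Defs

theorem diffCount_eq {G : Type*} [Group G] (D : Set G) (g : G) :
    diffCount D g = Set.ncard {x : G | x ∈ D ∧ g⁻¹ * x ∈ D} := by
  unfold diffCount
  rw [← Nat.card_coe_set_eq]
  refine Nat.card_congr ⟨fun q => ⟨q.1.1, q.1.1.2, ?_⟩,
    fun x => ⟨(⟨x.1, x.2.1⟩, ⟨g⁻¹ * x.1, x.2.2⟩), by simp⟩, ?_, ?_⟩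
  · obtain ⟨⟨d1, d2⟩, h⟩ := q
    simp only at h ⊢
    rw [← h]; simp
  · rintro ⟨⟨⟨d1, h1⟩, ⟨d2, h2⟩⟩, h⟩
    simp only at h
    subst h
    simp
  · rintro ⟨x, hx⟩
    simp

/-- transfer along a crossed bijection -/
theorem transfer_pds {G H : Type*} [Group G] [Group H] (D : Set G) (v k l μ : ℕ)
    (hD : IsPDS D v k l μ) (h1 : (1 : G) ∉ D) (hrev : D⁻¹ = D)
    (θ : H ≃ G) (α : H → G →* G) (hα : ∀ h x, α h x ∈ D ↔ x ∈ D)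
    (hθ : ∀ g h, θ (g * h) = θ g * α g (θ h)) :
    ∃ D' : Set H, IsPDS D' v k l μ ∧ (1 : H) ∉ D' ∧ D'⁻¹ = D' := by
  have hone : θ 1 = 1 := by
    obtain ⟨y, hy⟩ := θ.surjective 1
    have h2 := hθ 1 y
    rw [one_mul, hy, (α 1).map_one, mul_one] at h2
    exact h2.symm
  have key : ∀ g, diffCount (θ ⁻¹' D) g = diffCount D (θ g) := by
    intro g
    rw [diffCount_eq, diffCount_eq]
    rw [← Set.ncard_image_of_injective _ θ.injective]
    congr 1
    ext x
    simp only [Set.mem_image, Set.mem_ofPred_eq, Set.mem_preimage]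
    have aux : ∀ y, θ (g⁻¹ * y) ∈ D ↔ (θ g)⁻¹ * θ y ∈ D := by
      intro y
      have := hθ g (g⁻¹ * y)
      rw [mul_inv_cancel_left] at this
      rw [this, inv_mul_cancel_left, hα]
    constructor
    · rintro ⟨y, ⟨h1, h2⟩, rfl⟩
      exact ⟨h1, (aux y).1 h2⟩
    · rintro ⟨h1, h2⟩
      refine ⟨θ.symm x, ⟨by simpa using h1, (aux _).2 (by simpa using h2)⟩, by simp⟩
  have hne : ∀ g, g ≠ 1 → θ g ≠ 1 := fun g hg h => hg (θ.injective (h.trans hone.symm))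
  refine ⟨θ ⁻¹' D, ⟨?_, ?_, ?_, ?_⟩, ?_, ?_⟩
  · rw [Nat.card_congr θ]; exact hD.1
  · rw [← hD.2.1]
    exact Nat.card_congr (θ.subtypeEquiv (fun a => Iff.rfl))
  · intro g hg hg1
    rw [key]; exact hD.2.2.1 _ hg (hne g hg1)
  · intro g hg hg1
    rw [key]; exact hD.2.2.2 _ hg (hne g hg1)
  · simpa [hone] using h1
  · ext g
    have h := hθ g⁻¹ g
    rw [inv_mul_cancel, hone] at h
    have h2 : (θ g⁻¹)⁻¹ = α g⁻¹ (θ g) := by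
      rw [inv_eq_iff_mul_eq_one]; exact h.symm
    rw [Set.mem_inv, Set.mem_preimage, Set.mem_preimage, ← hα g⁻¹ (θ g), ← h2, ← Set.mem_inv, hrev]

/-- coordinates on `H` -/
theorem exists_coords {H : Type*} [Group H] (N s : ℕ) [NeZero N] (a c : H)
    (ha : orderOf a = N) (hc : orderOf c = N)
    (hgen : Subgroup.closure {a, c} = ⊤)
    (hint : Subgroup.zpowers a ⊓ Subgroup.zpowers c = ⊥)
    (hconj : c * a * c⁻¹ = a ^ s) :
    ∃ θ : H ≃ ZMod N × ZMod N, ∀ g h, θ (g * h) =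
      ((θ g).1 + (s : ZMod N) ^ (θ g).2.val * (θ h).1, (θ g).2 + (θ h).2) := by
  have hca1 : ∀ k, c * a ^ k = a ^ (s * k) * c := by
    intro k
    have : (c * a * c⁻¹) ^ k = c * a ^ k * c⁻¹ := conj_pow
    rw [hconj, ← pow_mul] at this
    rw [this]; group
  have hca : ∀ j k, c ^ j * a ^ k = a ^ (s ^ j * k) * c ^ j := by
    intro j
    induction j with
    | zero => intro k; simp
    | succ j ih =>
      intro k
      rw [pow_succ, mul_assoc, hca1, ← mul_assoc, ih, mul_assoc, ← pow_succ, pow_succ s, mul_assoc]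
  have hmul : ∀ i j k l, (a ^ i * c ^ j) * (a ^ k * c ^ l) = a ^ (i + s ^ j * k) * c ^ (j + l) := by
    intro i j k l
    rw [mul_assoc, ← mul_assoc (c ^ j), hca, pow_add, pow_add]; group
  have hsurj : ∀ h : H, ∃ i j : ℕ, h = a ^ i * c ^ j := by
    intro h
    have hh : h ∈ Subgroup.closure {a, c} := by rw [hgen]; trivial
    induction hh using Subgroup.closure_induction with
    | mem x hx =>
      rcases hx with rfl | rfl
      · exact ⟨1, 0, by simp⟩
      · exact ⟨0, 1, by simp⟩
    | one => exact ⟨0, 0, by simp⟩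
    | mul x y _ _ hx hy =>
      obtain ⟨i, j, rfl⟩ := hx
      obtain ⟨k, l, rfl⟩ := hy
      exact ⟨_, _, hmul _ _ _ _⟩
    | inv x _ hx =>
      obtain ⟨i, j, rfl⟩ := hx
      have e1 : ∀ z : H, orderOf z = N → ∀ i : ℕ, (z ^ i)⁻¹ = z ^ ((N - 1) * i) := by
        intro z hz i
        rw [inv_eq_iff_mul_eq_one, ← pow_add]
        have : i + (N - 1) * i = N * i := by
          have := NeZero.pos N
          obtain ⟨M, rfl⟩ : ∃ M, N = M + 1 := ⟨N - 1, by omega⟩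
          simp; ring
        rw [this, pow_mul, ← hz, pow_orderOf_eq_one, one_pow]
      rw [mul_inv_rev, e1 a ha, e1 c hc, hca]
      exact ⟨_, _, rfl⟩
  have hinj : ∀ i j k l : ℕ, a ^ i * c ^ j = a ^ k * c ^ l →
      (i : ZMod N) = k ∧ (j : ZMod N) = l := by
    intro i j k l h
    have h2 : (a ^ k)⁻¹ * a ^ i = c ^ l * (c ^ j)⁻¹ := by
      rw [eq_mul_inv_iff_mul_eq, mul_assoc, h]; group
    have h3 : (a ^ k)⁻¹ * a ^ i ∈ Subgroup.zpowers a ⊓ Subgroup.zpowers c := by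
      refine Subgroup.mem_inf.2 ⟨?_, ?_⟩
      · exact mul_mem (inv_mem (Subgroup.npow_mem_zpowers _ _)) (Subgroup.npow_mem_zpowers _ _)
      · rw [h2]
        exact mul_mem (Subgroup.npow_mem_zpowers _ _) (inv_mem (Subgroup.npow_mem_zpowers _ _))
    rw [hint, Subgroup.mem_bot] at h3
    have h4 := h2.symm.trans h3
    rw [inv_mul_eq_one] at h3
    rw [mul_inv_eq_one] at h4
    rw [pow_eq_pow_iff_modEq, ha] at h3
    rw [pow_eq_pow_iff_modEq, hc] at h4
    exact ⟨((ZMod.natCast_eq_natCast_iff _ _ _).2 h3).symm,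
      ((ZMod.natCast_eq_natCast_iff _ _ _).2 h4).symm⟩
  choose I J hIJ using hsurj
  have hval : ∀ i j : ℕ, (I (a ^ i * c ^ j) : ZMod N) = i ∧ (J (a ^ i * c ^ j) : ZMod N) = j :=
    fun i j => hinj _ _ _ _ (hIJ _).symm
  have hpa : ∀ z : H, orderOf z = N → ∀ i j : ℕ, (i : ZMod N) = j → z ^ i = z ^ j := by
    intro z hz i j hij
    rw [pow_eq_pow_iff_modEq, hz]
    exact (ZMod.natCast_eq_natCast_iff _ _ _).1 hij
  let θ : H ≃ ZMod N × ZMod N :=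
    { toFun := fun h => ((I h : ZMod N), (J h : ZMod N))
      invFun := fun x => a ^ x.1.val * c ^ x.2.val
      left_inv := by
        intro h
        conv_rhs => rw [hIJ h]
        simp only
        rw [hpa a ha _ (I h) (by simp), hpa c hc _ (J h) (by simp)]
      right_inv := by
        intro x
        simp [(hval _ _).1, (hval _ _).2] }
  refine ⟨θ, fun g h => ?_⟩
  have hs : ∀ m : ℕ, (s : ZMod N) ^ ((m : ZMod N)).val * (I h : ZMod N) = (s : ZMod N) ^ m * (I h : ZMod N) := by
    intro m
    have e : c ^ ((m : ZMod N)).val = c ^ m := hpa c hc _ _ (by simp)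
    have h1 := hca ((m : ZMod N)).val (I h)
    rw [e, hca] at h1
    have h2 := mul_right_cancel h1
    have h3 := (hinj (s ^ ((m : ZMod N)).val * I h) 0 (s ^ m * I h) 0
      (by rw [pow_zero, mul_one, mul_one]; exact h2.symm)).1
    rw [Nat.cast_mul, Nat.cast_mul, Nat.cast_pow, Nat.cast_pow] at h3
    exact h3
  change ((I (g * h) : ZMod N), (J (g * h) : ZMod N)) = ((I g : ZMod N) +
    (s : ZMod N) ^ ((J g : ZMod N)).val * (I h : ZMod N), (J g : ZMod N) + (J h : ZMod N))
  have : g * h = a ^ (I g + s ^ (J g) * I h) * c ^ (J g + J h) := by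
    conv_lhs => rw [hIJ g, hIJ h]
    exact hmul _ _ _ _
  rw [hs, this, (hval _ _).1, (hval _ _).2]
  push_cast
  rfl

set_option maxHeartbeats 2000000 in
/-- the multiplier theorem in the case needed -/
theorem multiplier_aux (p n N s : ℕ) (hp : p.Prime) (hn : 2 ≤ n) (hN : N = p ^ n)
    (hs : s = p ^ (n - 1) + 1) [NeZero N]
    (K : Type) [Field K] [Algebra ℚ K] [CharZero K] [IsCyclotomicExtension {N} ℚ K]
    (D : Set (Multiplicative (ZMod N × ZMod N))) (v k l μ : ℕ)
    (hD : IsPDS D v k l μ) (h1 : (1 : Multiplicative (ZMod N × ZMod N)) ∉ D)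
    (hrev : D⁻¹ = D) (x : ZMod N × ZMod N) :
    Multiplicative.ofAdd ((s : ZMod N) • x) ∈ D ↔ Multiplicative.ofAdd x ∈ D := by
  classical
  have hcop : s.Coprime N := by
    rw [hN]
    apply Nat.Coprime.pow_right
    rw [hs, Nat.coprime_comm, Nat.Prime.coprime_iff_not_dvd hp]
    intro hdvd
    have h2 : p ∣ p ^ (n - 1) := dvd_pow_self _ (by omega)
    exact hp.one_lt.ne' (Nat.dvd_one.1 ((Nat.dvd_add_right h2).1 hdvd))
  let ζ : K := IsCyclotomicExtension.zeta N ℚ K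
  have hζ : IsPrimitiveRoot ζ N := IsCyclotomicExtension.zeta_spec N ℚ K
  have hζs : IsPrimitiveRoot (ζ ^ s) N := hζ.pow_of_coprime s hcop
  have hirr : Irreducible (Polynomial.cyclotomic N ℚ) :=
    Polynomial.cyclotomic.irreducible_rat (NeZero.pos N)
  let σ : K ≃ₐ[ℚ] K := IsCyclotomicExtension.fromZetaAut hζs hirr
  have hσ : σ ζ = ζ ^ s := IsCyclotomicExtension.fromZetaAut_spec hζs hirr
  let ψ : AddChar (ZMod N) K := AddChar.zmodChar N hζ.pow_eq_one
  have hψ : ψ.IsPrimitive := AddChar.zmodChar_primitive_of_primitive_root N hζ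
  have hσψ : ∀ y : ZMod N, σ (ψ y) = ψ ((s : ZMod N) * y) := by
    intro y
    have e1 : ψ y = ζ ^ y.val := AddChar.zmodChar_apply _ _
    have e2 : ψ ((s : ZMod N) * y) = ζ ^ (s * y.val) := by
      have := AddChar.zmodChar_apply' hζ.pow_eq_one (s * y.val)
      rw [← this]; simp [ψ]
    rw [e1, e2, map_pow, hσ, pow_mul]
  -- the pairing
  let χ : ZMod N × ZMod N → ZMod N × ZMod N → K := fun u g => ψ (u.1 * g.1 + u.2 * g.2)
  have χadd : ∀ u g h, χ u (g + h) = χ u g * χ u h := by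
    intro u g h
    simp only [χ]
    rw [← AddChar.map_add_eq_mul]
    congr 1
    simp only [Prod.fst_add, Prod.snd_add]; ring
  have χsymm : ∀ u g, χ u g = χ g u := by
    intro u g; simp only [χ]; congr 1; ring
  have χsum : ∀ g, ∑ u, χ u g = if g = 0 then (N : K) * N else 0 := by
    intro g
    simp only [χ, AddChar.map_add_eq_mul]
    rw [Fintype.sum_prod_type]
    simp only
    rw [← Finset.sum_mul_sum, AddChar.sum_mulShift _ hψ, AddChar.sum_mulShift _ hψ, ZMod.card]
    by_cases h1 : g.1 = 0 <;> by_cases h2 : g.2 = 0 <;> simp [h1, h2, Prod.ext_iff]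
  have χsum' : ∀ u, u ≠ 0 → ∑ g, χ u g = 0 := by
    intro u hu
    simp_rw [χsymm u]
    rw [χsum, if_neg hu]
  have χσ : ∀ u g, σ (χ u g) = χ ((s : ZMod N) • u) g := by
    intro u g
    simp only [χ, hσψ]
    congr 1
    simp only [Prod.smul_fst, Prod.smul_snd, smul_eq_mul]; ring
  have χsmul : ∀ u g, χ u ((s : ZMod N) • g) = χ ((s : ZMod N) • u) g := by
    intro u g
    simp only [χ]
    congr 1
    simp only [Prod.smul_fst, Prod.smul_snd, smul_eq_mul]; ring
  -- indicator
  let i : ZMod N × ZMod N → K := fun g => if Multiplicative.ofAdd g ∈ D then 1 else 0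
  have ineg : ∀ g, i (-g) = i g := by
    intro g
    have : Multiplicative.ofAdd (-g) ∈ D ↔ Multiplicative.ofAdd g ∈ D := by
      rw [ofAdd_neg, ← Set.mem_inv, hrev]
    simp only [i, this]
  have σi : ∀ g, σ (i g) = i g := by
    intro g
    simp only [i]
    split_ifs <;> simp
  have icount : ∀ g, ∑ y, i y * i (y - g) = (diffCount D (Multiplicative.ofAdd g) : K) := by
    intro g
    rw [diffCount_eq]
    have e : {y | y ∈ D ∧ (Multiplicative.ofAdd g)⁻¹ * y ∈ D} =
        ((Finset.univ.filter (fun y : ZMod N × ZMod N => Multiplicative.ofAdd y ∈ D ∧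
          Multiplicative.ofAdd (y - g) ∈ D)).map Multiplicative.ofAdd.toEmbedding : Set _) := by
      ext y
      simp only [Set.mem_ofPred_eq, Finset.coe_map, Finset.coe_filter, Finset.mem_univ, true_and,
        Set.mem_image, Equiv.coe_toEmbedding]
      constructor
      · rintro ⟨h1, h2⟩
        refine ⟨y.toAdd, ⟨h1, ?_⟩, rfl⟩
        rw [sub_eq_neg_add]; exact h2
      · rintro ⟨z, ⟨h1, h2⟩, rfl⟩
        refine ⟨h1, ?_⟩
        rw [sub_eq_neg_add] at h2; exact h2
    rw [e, Set.ncard_coe_finset, Finset.card_map, Finset.card_filter]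
    push_cast
    refine Finset.sum_congr rfl fun y _ => ?_
    simp only [i]
    split_ifs <;> simp_all
  have hdiff : ∀ g, (diffCount D (Multiplicative.ofAdd g) : K) =
      μ + ((l : K) - μ) * i g + (if g = 0 then (diffCount D 1 : K) - μ else 0) := by
    intro g
    by_cases hg : g = 0
    · subst hg
      have : i 0 = 0 := if_neg h1
      rw [this]; simp
    · have hg' : Multiplicative.ofAdd g ≠ 1 := fun h => hg h
      by_cases hgD : Multiplicative.ofAdd g ∈ D
      · rw [hD.2.2.1 _ hgD hg']; simp [i, hgD, hg]
      · rw [hD.2.2.2 _ hgD hg']; simp [i, hgD, hg]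
  let S : ZMod N × ZMod N → K := fun u => ∑ g, i g * χ u g
  set β : K := (l : K) - μ with hβ
  set γ : K := (diffCount D 1 : K) - μ with hγ
  have Ssq : ∀ u, u ≠ 0 → S u * S u = β * S u + γ := by
    intro u hu
    have e1 : S u * S u = ∑ g, (∑ y, i y * i (y - g)) * χ u g := by
      have : S u = ∑ z, i z * χ u (-z) := by
        rw [← Equiv.sum_comp (Equiv.neg _)]
        simp [S, ineg]
      calc S u * S u = (∑ y, i y * χ u y) * ∑ z, i z * χ u (-z) := by rw [← this]
        _ = ∑ y, ∑ z, (i y * χ u y) * (i z * χ u (-z)) := Finset.sum_mul_sum _ _ _ _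
        _ = ∑ y, ∑ g, (i y * i (y - g)) * χ u g := by
          refine Finset.sum_congr rfl fun y _ => ?_
          rw [← Equiv.sum_comp (Equiv.subLeft y)]
          refine Finset.sum_congr rfl fun g _ => ?_
          have : χ u g = χ u y * χ u (-(y - g)) := by
            rw [← χadd]; congr 1; abel
          rw [this]
          simp only [Equiv.subLeft_apply]; ring
        _ = _ := by
          rw [Finset.sum_comm]
          simp_rw [Finset.sum_mul]
    rw [e1]
    simp_rw [icount, hdiff, add_mul, Finset.sum_add_distrib]
    rw [← Finset.mul_sum, χsum' u hu]
    have χ0 : χ u 0 = 1 := by simp [χ]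
    simp [mul_assoc, ← Finset.mul_sum, S, χ0]
  have Sσ : ∀ u, σ (S u) = S ((s : ZMod N) • u) := by
    intro u
    simp only [S, map_sum, map_mul, σi, χσ]
  let u0 : ZMod N × ZMod N := ((p : ZMod N), 0)
  have hu0 : u0 ≠ 0 := by
    intro h
    have : (p : ZMod N) = 0 := congrArg Prod.fst h
    rw [ZMod.natCast_eq_zero_iff] at this
    have h3 := Nat.le_of_dvd hp.pos this
    have h4 : p ^ 1 < p ^ n := Nat.pow_lt_pow_right hp.one_lt (by omega)
    rw [pow_one] at h4
    omega
  have hsu0 : (s : ZMod N) • u0 = u0 := by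
    have : (s : ZMod N) * p = p := by
      have e : s * p = N + p := by
        rw [hs, hN, add_mul, one_mul, ← pow_succ]; congr 2; omega
      rw [← Nat.cast_mul, e]; simp
    simp [u0, this]
  have hr := Sσ u0
  rw [hsu0] at hr
  have hβσ : σ β = β := by simp [hβ]
  have Sinv : ∀ u, S ((s : ZMod N) • u) = S u := by
    intro u
    by_cases hu : u = 0
    · rw [hu, smul_zero]
    · rw [← Sσ]
      have h1 := Ssq u hu
      have h2 := Ssq u0 hu0
      have h3 : (S u - S u0) * (S u - (β - S u0)) = 0 := by linear_combination h1 - h2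
      rcases mul_eq_zero.1 h3 with h | h
      · rw [sub_eq_zero.1 h, hr]
      · rw [sub_eq_zero.1 h, map_sub, hr, hβσ]
  have Finv : ∀ h, ∑ u, S u * χ u (-h) = (N : K) * N * i h := by
    intro h
    simp only [S, Finset.sum_mul]
    rw [Finset.sum_comm]
    have : ∀ g, ∑ u, i g * χ u g * χ u (-h) = if g = h then (N : K) * N * i g else 0 := by
      intro g
      simp_rw [mul_assoc, ← χadd]
      rw [← Finset.mul_sum, χsum]
      simp only [add_neg_eq_zero]
      split_ifs <;> ring
    simp [this]
  let U : (ZMod N)ˣ := ZMod.unitOfCoprime s hcop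
  have hfin : i ((s : ZMod N) • x) = i x := by
    have h1 := Finv ((s : ZMod N) • x)
    have h2 := Finv x
    rw [← Equiv.sum_comp (MulAction.toPerm U)] at h2
    have h3 : ∀ u, S (MulAction.toPerm U u) * χ (MulAction.toPerm U u) (-x) =
        S u * χ u (-((s : ZMod N) • x)) := by
      intro u
      have : MulAction.toPerm U u = (s : ZMod N) • u := by
        rw [MulAction.toPerm_apply, Units.smul_def]; simp [U]
      rw [this, Sinv, ← smul_neg, χsmul]
    simp_rw [h3] at h2
    rw [h1] at h2
    have hN0 : (N : K) ≠ 0 := Nat.cast_ne_zero.2 (NeZero.ne N)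
    exact mul_left_cancel₀ (mul_ne_zero hN0 hN0) h2
  simp only [i] at hfin
  split_ifs at hfin <;> simp_all

theorem multiplier (p n N s : ℕ) (hp : p.Prime) (hn : 2 ≤ n) (hN : N = p ^ n)
    (hs : s = p ^ (n - 1) + 1) [NeZero N]
    (D : Set (Multiplicative (ZMod N × ZMod N))) (v k l μ : ℕ)
    (hD : IsPDS D v k l μ) (h1 : (1 : Multiplicative (ZMod N × ZMod N)) ∉ D)
    (hrev : D⁻¹ = D) (x : ZMod N × ZMod N) :
    Multiplicative.ofAdd ((s : ZMod N) • x) ∈ D ↔ Multiplicative.ofAdd x ∈ D := by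
  have : NeZero ((N : ℕ) : ℚ) := ⟨Nat.cast_ne_zero.2 (NeZero.ne N)⟩
  exact @multiplier_aux p n N s hp hn hN hs _ (CyclotomicField N ℚ) _
    (CyclotomicField.algebra N ℚ) _ (CyclotomicField.isCyclotomicExtension N ℚ)
    D v k l μ hD h1 hrev x

theorem choose_two_dvd (p n m : ℕ) (hp : p.Prime) (hn : 2 ≤ n) (hpn : ¬ (p = 2 ∧ n = 2))
    (hm : p ^ (n - 1) ∣ m) : p ∣ m.choose 2 := by
  have h2 : m.choose 2 * 2 = m * (m - 1) := by
    rw [Nat.choose_two_right, Nat.div_mul_cancel (Nat.even_mul_pred_self m).two_dvd]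
  have hpm : p ∣ m := (dvd_pow_self p (by omega)).trans hm
  by_cases h : p = 2
  · subst h
    have h4 : 4 ∣ m := by
      have : 2 ^ 2 ∣ 2 ^ (n - 1) := pow_dvd_pow 2 (by omega)
      exact this.trans hm
    obtain ⟨t, rfl⟩ := h4
    exact ⟨t * (4 * t - 1), by nlinarith⟩
  · have : p ∣ m.choose 2 * 2 := by rw [h2]; exact Dvd.dvd.mul_right hpm _
    refine (Nat.Coprime.dvd_mul_right ?_).1 this
    exact (Nat.coprime_primes hp Nat.prime_two).2 h

theorem geom_facts (p n N s : ℕ) (hp : p.Prime) (hn : 2 ≤ n) (hN : N = p ^ n)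
    (hs : s = p ^ (n - 1) + 1) (hpn : ¬ (p = 2 ∧ n = 2)) (m : ℕ) :
    (∑ k ∈ Finset.range m, (s : ZMod N) ^ k) = 0 ↔ (m : ZMod N) = 0 := by
  set q : ZMod N := ((p ^ (n - 1) : ℕ) : ZMod N) with hq
  have hqp : ∀ c : ℕ, p ∣ c → q * c = 0 := by
    intro c hc
    rw [hq, ← Nat.cast_mul, ZMod.natCast_eq_zero_iff, hN]
    have : p ^ n = p ^ (n - 1) * p := by rw [← pow_succ]; congr 1; omega
    rw [this]; exact Nat.mul_dvd_mul_left _ hc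
  have hqq : q * q = 0 := hqp _ (dvd_pow_self p (by omega))
  have hsq : (s : ZMod N) = q + 1 := by rw [hs, hq]; push_cast; rfl
  have hpow : ∀ j : ℕ, (s : ZMod N) ^ j = 1 + j * q := by
    intro j
    induction j with
    | zero => simp
    | succ j ih =>
      rw [pow_succ, ih, hsq]; push_cast; linear_combination (j : ZMod N) * hqq
  have hf : ∀ j : ℕ, (∑ k ∈ Finset.range j, (s : ZMod N) ^ k) = j + q * (j.choose 2 : ℕ) := by
    intro j
    induction j with
    | zero => simp
    | succ j ih =>
      rw [Finset.sum_range_succ, ih, hpow, Nat.choose_succ_succ' j 1, Nat.choose_one_right]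
      push_cast; ring
  rw [hf]
  have key : p ^ (n - 1) ∣ m → q * (m.choose 2 : ℕ) = 0 :=
    fun h => hqp _ (choose_two_dvd p n m hp hn hpn h)
  have hdN : p ^ (n - 1) ∣ N := by rw [hN]; exact pow_dvd_pow p (by omega)
  constructor
  · intro h
    have h' := h
    rw [hq, ← Nat.cast_mul, ← Nat.cast_add, ZMod.natCast_eq_zero_iff] at h'
    have h3 := (Nat.dvd_add_left (Nat.dvd_mul_right _ _)).1 (hdN.trans h')
    rw [key h3, add_zero] at h
    exact h
  · intro h
    have h' := h
    rw [ZMod.natCast_eq_zero_iff] at h'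
    rw [key (hdN.trans h'), h, add_zero]

theorem main_case (p n N s : ℕ) (hp : p.Prime) (hn : 2 ≤ n) (hN : N = p ^ n)
    (hs : s = p ^ (n - 1) + 1) (hpn : ¬ (p = 2 ∧ n = 2)) [NeZero N]
    (D : Set (Multiplicative (ZMod N × ZMod N))) (v k l μ : ℕ)
    (hD : IsPDS D v k l μ) (h1 : (1 : Multiplicative (ZMod N × ZMod N)) ∉ D)
    (hrev : D⁻¹ = D) {H : Type*} [Group H]
    (θ : H ≃ ZMod N × ZMod N) (hθ : ∀ g h, θ (g * h) =
      ((θ g).1 + (s : ZMod N) ^ (θ g).2.val * (θ h).1, (θ g).2 + (θ h).2)) :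
    ∃ D' : Set H, IsPDS D' v k l μ ∧ (1 : H) ∉ D' ∧ D'⁻¹ = D' := by
  have hmult := multiplier p n N s hp hn hN hs D v k l μ hD h1 hrev
  have hmultj : ∀ (j : ℕ) x, Multiplicative.ofAdd ((s : ZMod N) ^ j • x) ∈ D ↔
      Multiplicative.ofAdd x ∈ D := by
    intro j
    induction j with
    | zero => simp
    | succ j ih => intro x; rw [pow_succ, mul_smul, ih, hmult]
  let f : ℕ → ZMod N := fun m => ∑ k ∈ Finset.range m, (s : ZMod N) ^ k
  have hf0 : ∀ m, f m = 0 ↔ (m : ZMod N) = 0 := geom_facts p n N s hp hn hN hs hpn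
  have hfadd : ∀ i j, f (i + j) = f i + (s : ZMod N) ^ i * f j := by
    intro i j
    simp only [f, Finset.sum_range_add, Finset.mul_sum, pow_add]
  have hsu : IsUnit (s : ZMod N) := by
    rw [ZMod.isUnit_iff_coprime, hN]
    apply Nat.Coprime.pow_right
    rw [hs, Nat.coprime_comm, Nat.Prime.coprime_iff_not_dvd hp]
    intro hdvd
    have h2 : p ∣ p ^ (n - 1) := dvd_pow_self _ (by omega)
    exact hp.one_lt.ne' (Nat.dvd_one.1 ((Nat.dvd_add_right h2).1 hdvd))
  have hfle : ∀ i j, i ≤ j → (f i = f j ↔ (i : ZMod N) = j) := by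
    intro i j hij
    obtain ⟨m, rfl⟩ := Nat.exists_eq_add_of_le hij
    rw [hfadd, Nat.cast_add]
    simp only [left_eq_add]
    rw [(hsu.pow i).mul_right_eq_zero, hf0]
  have hfij : ∀ i j, (f i = f j ↔ (i : ZMod N) = j) := by
    intro i j
    rcases le_total i j with h | h
    · exact hfle i j h
    · rw [eq_comm, hfle j i h, eq_comm]
  let F : ZMod N → ZMod N := fun y => f y.val
  have hFinj : Function.Injective F := by
    intro y z h
    have := (hfij _ _).1 h
    simpa using this
  have hFadd : ∀ y z, F (y + z) = F y + (s : ZMod N) ^ y.val * F z := by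
    intro y z
    simp only [F]
    rw [← hfadd, hfij]
    simp
  let Fe : ZMod N ≃ ZMod N := Equiv.ofBijective F (Finite.injective_iff_bijective.1 hFinj)
  let Θ : H ≃ Multiplicative (ZMod N × ZMod N) :=
    (θ.trans ((Equiv.refl _).prodCongr Fe)).trans Multiplicative.ofAdd
  refine transfer_pds D v k l μ hD h1 hrev Θ
    (fun g => AddMonoidHom.toMultiplicative
      (DistribSMul.toAddMonoidHom (ZMod N × ZMod N) ((s : ZMod N) ^ (θ g).2.val))) ?_ ?_
  · intro h x
    exact hmultj _ x.toAdd
  · intro g h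
    change Multiplicative.ofAdd ((θ (g * h)).1, F (θ (g * h)).2) = Multiplicative.ofAdd
      (((θ g).1, F (θ g).2) + (s : ZMod N) ^ (θ g).2.val • ((θ h).1, F (θ h).2))
    rw [hθ, hFadd]
    rfl

/-- counting on an initial segment -/
def cnt16 (q : ℕ → Bool) : ℕ → ℕ
  | 0 => 0
  | n + 1 => bif q n then cnt16 q n + 1 else cnt16 q n

/-- index of a pair -/
def idx4 (x : ZMod 4 × ZMod 4) : ℕ := x.1.val + 4 * x.2.val

/-- subtraction in the abelian group, on indices -/
def gsub (g i : ℕ) : ℕ := (i % 4 + 4 - g % 4) % 4 + 4 * ((i / 4 + 4 - g / 4) % 4)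

/-- left division in the nonabelian group, on indices -/
def hsub (g i : ℕ) : ℕ :=
  (bif (g / 4) % 2 == 0 then (i % 4 + 4 - g % 4) % 4 else (g % 4 + 4 - i % 4) % 4)
    + 4 * ((i / 4 + 4 - g / 4) % 4)

/-- difference counts for bitmasks -/
def mcnt (sub : ℕ → ℕ → ℕ) (m g : ℕ) : ℕ :=
  cnt16 (fun i => m.testBit i && m.testBit (sub g i)) 16

/-- bitmask of a symmetric set -/
def mk16 (b0 b1 b2 b3 b4 b5 b6 b7 b8 : Bool) : ℕ :=
  b0.toNat * 4 + b1.toNat * 256 + b2.toNat * 1024 + b3.toNat * 10 + b4.toNat * 4112 +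
    b5.toNat * 32800 + b6.toNat * 2560 + b7.toNat * 8320 + b8.toNat * 16448

/-- difference sets in the nonabelian group of order 16 -/
def tbl : List (ℕ × ℕ × ℕ × ℕ) :=
  [(0, 0, 0, 0), (1024, 1, 0, 0), (2564, 3, 2, 0), (36480, 5, 0, 2), (35716, 6, 2, 2),
   (42404, 7, 6, 0), (43690, 8, 0, 8), (61152, 9, 4, 6), (60388, 10, 6, 6), (61166, 12, 8, 12),
   (65278, 14, 12, 14), (65534, 15, 14, 0)]

/-- being a difference set, with the parameters forced -/
def pdsB (sub : ℕ → ℕ → ℕ) (m k l μ : ℕ) : Bool :=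
  cnt16 m.testBit 16 == k && (List.range 15).all (fun g =>
    mcnt sub m (g + 1) == (bif m.testBit (g + 1) then l else μ)) &&
  (k == 0 || (List.range 15).any (fun g => m.testBit (g + 1))) &&
  (k == 15 || (List.range 15).any (fun g => !m.testBit (g + 1)))

/-- witness of failure -/
def badB (m : ℕ) : Bool :=
  (List.range 15).any fun g => (List.range 15).any fun h =>
    m.testBit (g + 1) == m.testBit (h + 1) && !(mcnt gsub m (g + 1) == mcnt gsub m (h + 1))

/-- table entry check -/
def tblB (t : ℕ × ℕ × ℕ × ℕ) : Bool :=
  pdsB hsub t.1 t.2.1 t.2.2.1 t.2.2.2 && !t.1.testBit 0 &&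
  (List.range 15).all (fun g => t.1.testBit (g + 1) == t.1.testBit (hsub (g + 1) 0) &&
    (!t.1.testBit (g + 1) || !(t.2.1 == 0)) && (t.1.testBit (g + 1) || !(t.2.1 == 15)))

theorem tbl_ok : ∀ t ∈ tbl, tblB t = true := by decide +kernel

theorem mk_bits : ∀ b0 b1 b2 b3 b4 b5 b6 b7 b8 : Bool,
    (List.range 16).map (mk16 b0 b1 b2 b3 b4 b5 b6 b7 b8).testBit =
      [false, b3, b0, b3, b4, b5, b8, b7, b1, b6, b2, b6, b4, b7, b8, b5] := by
  decide +kernel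

theorem all_ok : ∀ b0 b1 b2 b3 b4 b5 b6 b7 b8 : Bool,
    (badB (mk16 b0 b1 b2 b3 b4 b5 b6 b7 b8) || tbl.any (fun t =>
      pdsB gsub (mk16 b0 b1 b2 b3 b4 b5 b6 b7 b8) t.2.1 t.2.2.1 t.2.2.2)) = true := by
  decide +kernel

theorem cnt16_eq (q : ℕ → Bool) (n : ℕ) :
    cnt16 q n = ((Finset.range n).filter (fun i => q i = true)).card := by
  induction n with
  | zero => rfl
  | succ n ih =>
    rw [Finset.range_add_one, Finset.filter_insert]
    cases h : q n <;> simp [cnt16, h, ih]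

theorem idx4_lt (x : ZMod 4 × ZMod 4) : idx4 x < 16 := by
  have h1 := ZMod.val_lt x.1
  have h2 := ZMod.val_lt x.2
  unfold idx4; omega

theorem idx4_inj : Function.Injective idx4 := by
  have : ∀ x y : ZMod 4 × ZMod 4, idx4 x = idx4 y → x = y := by decide +kernel
  exact fun x y => this x y

theorem idx4_surj (i : ℕ) (hi : i < 16) : ∃ x, idx4 x = i := by
  have : ∀ i : Fin 16, ∃ x, idx4 x = i := by decide +kernel
  exact this ⟨i, hi⟩

theorem ncard_idx4 {X : Type*} (φ : X ≃ ZMod 4 × ZMod 4) (q : ℕ → Bool) :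
    Set.ncard {x : X | q (idx4 (φ x)) = true} = cnt16 q 16 := by
  rw [cnt16_eq, ← Set.ncard_coe_finset,
    ← Set.ncard_image_of_injective _ (idx4_inj.comp φ.injective)]
  congr 1
  ext i
  simp only [Set.mem_image, Set.mem_ofPred_eq, Function.comp, Finset.coe_filter, Finset.mem_range]
  constructor
  · rintro ⟨x, hx, rfl⟩
    exact ⟨idx4_lt _, hx⟩
  · rintro ⟨hi, hq⟩
    obtain ⟨x, rfl⟩ := idx4_surj i hi
    exact ⟨φ.symm x, by simpa using hq, by simp⟩

theorem diffCount_mask {X : Type*} [Group X] (φ : X ≃ ZMod 4 × ZMod 4) (sub : ℕ → ℕ → ℕ)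
    (hsub : ∀ g x, idx4 (φ (g⁻¹ * x)) = sub (idx4 (φ g)) (idx4 (φ x))) (m : ℕ) (g : X) :
    diffCount {x : X | m.testBit (idx4 (φ x)) = true} g = mcnt sub m (idx4 (φ g)) := by
  rw [diffCount_eq, mcnt, ← ncard_idx4 φ]
  congr 1
  ext x
  simp [hsub]

theorem idx4_pos (x : ZMod 4 × ZMod 4) (hx : x ≠ 0) : ∃ g, g < 15 ∧ idx4 x = g + 1 := by
  have h : idx4 x ≠ 0 := fun h => hx (idx4_inj (h.trans (by decide)))
  have := idx4_lt x
  exact ⟨idx4 x - 1, by omega, by omega⟩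

theorem four_case (D : Set (Multiplicative (ZMod 4 × ZMod 4))) (v k l μ : ℕ)
    (hD : IsPDS D v k l μ) (h1 : (1 : Multiplicative (ZMod 4 × ZMod 4)) ∉ D)
    (hrev : D⁻¹ = D) {H : Type*} [Group H]
    (θ : H ≃ ZMod 4 × ZMod 4) (hθ : ∀ g h, θ (g * h) =
      ((θ g).1 + ((3 : ℕ) : ZMod 4) ^ (θ g).2.val * (θ h).1, (θ g).2 + (θ h).2)) :
    ∃ D' : Set H, IsPDS D' v k l μ ∧ (1 : H) ∉ D' ∧ D'⁻¹ = D' := by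
  classical
  let φ : Multiplicative (ZMod 4 × ZMod 4) ≃ ZMod 4 × ZMod 4 := Multiplicative.toAdd
  have hφ : ∀ g x, idx4 (φ (g⁻¹ * x)) = gsub (idx4 (φ g)) (idx4 (φ x)) := by
    have : ∀ g x : ZMod 4 × ZMod 4, idx4 (-g + x) = gsub (idx4 g) (idx4 x) := by decide +kernel
    exact fun g x => this (φ g) (φ x)
  have hθ' : ∀ g x, idx4 (θ (g⁻¹ * x)) = hsub (idx4 (θ g)) (idx4 (θ x)) := by
    have : ∀ w u : ZMod 4 × ZMod 4, idx4 u = hsub (idx4 w)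
        (idx4 (w.1 + ((3 : ℕ) : ZMod 4) ^ w.2.val * u.1, w.2 + u.2)) := by decide +kernel
    intro g x
    have h := hθ g (g⁻¹ * x)
    rw [mul_inv_cancel_left] at h
    rw [h]
    exact this _ _
  have hθ1 : θ 1 = 0 := by
    have h := hθ 1 1
    rw [mul_one] at h
    have : ∀ w : ZMod 4 × ZMod 4, w = (w.1 + ((3 : ℕ) : ZMod 4) ^ w.2.val * w.1, w.2 + w.2) →
      w = 0 := by decide +kernel
    exact this _ h
  let b : ZMod 4 × ZMod 4 → Bool := fun x => decide (Multiplicative.ofAdd x ∈ D)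
  have bneg : ∀ x y, x = -y → b x = b y := by
    rintro x y rfl
    have : Multiplicative.ofAdd (-y) ∈ D ↔ Multiplicative.ofAdd y ∈ D := by
      rw [ofAdd_neg, ← Set.mem_inv, hrev]
    simp only [b, this]
  have b0 : b 0 = false := by simpa [b] using h1
  obtain ⟨m, hm, hmok⟩ : ∃ m : ℕ, (∀ x, m.testBit (idx4 x) = b x) ∧
      (badB m || tbl.any (fun t => pdsB gsub m t.2.1 t.2.2.1 t.2.2.2)) = true := by
    refine ⟨mk16 (b (2, 0)) (b (0, 2)) (b (2, 2)) (b (1, 0)) (b (0, 1)) (b (1, 1)) (b (1, 2))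
      (b (1, 3)) (b (2, 1)), ?_, all_ok _ _ _ _ _ _ _ _ _⟩
    have hb := mk_bits (b (2, 0)) (b (0, 2)) (b (2, 2)) (b (1, 0)) (b (0, 1)) (b (1, 1)) (b (1, 2))
      (b (1, 3)) (b (2, 1))
    generalize mk16 (b (2, 0)) (b (0, 2)) (b (2, 2)) (b (1, 0)) (b (0, 1)) (b (1, 1)) (b (1, 2))
      (b (1, 3)) (b (2, 1)) = m at hb ⊢
    have e1 : List.range 16 = [0, 1, 2, 3, 4, 5, 6, 7, 8, 9, 10, 11, 12, 13, 14, 15] := by decide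
    rw [e1] at hb
    simp only [List.map_cons, List.map_nil, List.cons.injEq, and_true] at hb
    obtain ⟨c0, c1, c2, c3, c4, c5, c6, c7, c8, c9, c10, c11, c12, c13, c14, c15⟩ := hb
    have key : ∀ x : ZMod 4 × ZMod 4, x = (0, 0) ∨ x = (1, 0) ∨ x = (2, 0) ∨ x = (3, 0) ∨
      x = (0, 1) ∨ x = (1, 1) ∨ x = (2, 1) ∨ x = (3, 1) ∨ x = (0, 2) ∨ x = (1, 2) ∨ x = (2, 2) ∨
      x = (3, 2) ∨ x = (0, 3) ∨ x = (1, 3) ∨ x = (2, 3) ∨ x = (3, 3) := by decide +kernel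
    intro x
    rcases key x with rfl | rfl | rfl | rfl | rfl | rfl | rfl | rfl | rfl | rfl | rfl | rfl |
      rfl | rfl | rfl | rfl
    · exact c0.trans b0.symm
    · exact c1
    · exact c2
    · exact c3.trans (bneg _ _ (by decide))
    · exact c4
    · exact c5
    · exact c6
    · exact c7.trans (bneg _ _ (by decide))
    · exact c8
    · exact c9
    · exact c10
    · exact c11.trans (bneg _ _ (by decide))
    · exact c12.trans (bneg _ _ (by decide))
    · exact c13
    · exact c14.trans (bneg _ _ (by decide))
    · exact c15.trans (bneg _ _ (by decide))
  have hDm : D = {x | m.testBit (idx4 (φ x)) = true} := by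
    ext x
    rw [Set.mem_ofPred_eq, hm]
    simp [b, φ]
  have hmD : ∀ g, g < 15 → mcnt gsub m (g + 1) = if m.testBit (g + 1) then l else μ := by
    intro g hg
    obtain ⟨x, hx⟩ := idx4_surj (g + 1) (by omega)
    have hx0 : Multiplicative.ofAdd x ≠ 1 := by
      intro h
      have : x = 0 := h
      rw [this] at hx
      have h0 : idx4 0 = 0 := by decide
      omega
    have hc := diffCount_mask φ gsub hφ m (Multiplicative.ofAdd x)
    rw [← hDm] at hc
    have hφx : φ (Multiplicative.ofAdd x) = x := rfl
    rw [hφx, hx] at hc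
    rw [← hc]
    have hmem : Multiplicative.ofAdd x ∈ D ↔ m.testBit (g + 1) = true := by
      rw [← hx, hm]; simp [b]
    split_ifs with hbit
    · exact hD.2.2.1 _ (hmem.2 hbit) hx0
    · exact hD.2.2.2 _ (fun h => hbit (hmem.1 h)) hx0
  have hnotbad : badB m = false := by
    rw [Bool.eq_false_iff]
    intro hb
    simp only [badB, List.any_eq_true, List.mem_range, Bool.and_eq_true, beq_iff_eq,
      Bool.not_eq_true', beq_eq_false_iff_ne] at hb
    obtain ⟨g, hg, h, hh, he, hne⟩ := hb
    apply hne
    rw [hmD g hg, hmD h hh, he]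
  rw [hnotbad, Bool.false_or, List.any_eq_true] at hmok
  obtain ⟨⟨T, k', l', μ'⟩, ht, hmt⟩ := hmok
  have htt := tbl_ok _ ht
  simp only [tblB, pdsB, Bool.and_eq_true, List.all_eq_true, List.any_eq_true, List.mem_range,
    beq_iff_eq, Bool.or_eq_true, Bool.not_eq_true', beq_eq_false_iff_ne] at hmt htt
  obtain ⟨⟨⟨mk, ml⟩, m0⟩, m15⟩ := hmt
  obtain ⟨⟨⟨⟨⟨tk, tl⟩, -⟩, -⟩, tz⟩, tg⟩ := htt
  have hcardD : k' = k := by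
    rw [← mk, ← hD.2.1, hDm, Nat.card_coe_set_eq, ncard_idx4]
  have hθne : ∀ g : H, g ≠ 1 → θ g ≠ 0 := fun g hg h => hg (θ.injective (h.trans hθ1.symm))
  have hidx0 : idx4 0 = 0 := by decide
  refine ⟨{x | T.testBit (idx4 (θ x)) = true}, ⟨?_, ?_, ?_, ?_⟩, ?_, ?_⟩
  · rw [← hD.1, Nat.card_congr θ, Nat.card_congr φ]
  · rw [Nat.card_coe_set_eq, ncard_idx4, tk, hcardD]
  · intro g hg hg1
    obtain ⟨i, hi, hgi⟩ := idx4_pos _ (hθne g hg1)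
    rw [Set.mem_ofPred_eq, hgi] at hg
    rw [diffCount_mask θ hsub hθ', hgi, tl i hi, hg, cond_true]
    have hk0 : k' ≠ 0 := by
      rcases (tg i hi).1.2 with h | h
      · rw [hg] at h; cases h
      · exact h
    obtain ⟨j, hj, hbj⟩ := m0.resolve_left hk0
    have e1 := ml j hj
    have e2 := hmD j hj
    rw [hbj] at e1 e2
    simp at e1 e2
    omega
  · intro g hg hg1
    obtain ⟨i, hi, hgi⟩ := idx4_pos _ (hθne g hg1)
    rw [Set.mem_ofPred_eq, hgi, Bool.not_eq_true] at hg
    rw [diffCount_mask θ hsub hθ', hgi, tl i hi, hg, cond_false]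
    have hk0 : k' ≠ 15 := by
      rcases (tg i hi).2 with h | h
      · rw [hg] at h; cases h
      · exact h
    obtain ⟨j, hj, hbj⟩ := m15.resolve_left hk0
    have e1 := ml j hj
    have e2 := hmD j hj
    rw [hbj] at e1 e2
    simp at e1 e2
    omega
  · rw [Set.mem_ofPred_eq, hθ1, hidx0, tz]; simp
  · ext g
    rw [Set.mem_inv, Set.mem_ofPred_eq, Set.mem_ofPred_eq]
    by_cases hg1 : g = 1
    · rw [hg1, inv_one]
    · obtain ⟨i, hi, hgi⟩ := idx4_pos _ (hθne g hg1)
      have h := hθ' g 1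
      rw [mul_one, hθ1, hidx0, hgi] at h
      rw [h, hgi, (tg i hi).1.1]

theorem transfer_all (p n N s : ℕ) (hp : p.Prime) (hn : 2 ≤ n) (hN : N = p ^ n)
    (hs : s = p ^ (n - 1) + 1) [NeZero N]
    (D : Set (Multiplicative (ZMod N × ZMod N))) (v k l μ : ℕ)
    (hD : IsPDS D v k l μ) (h1 : (1 : Multiplicative (ZMod N × ZMod N)) ∉ D)
    (hrev : D⁻¹ = D) {H : Type*} [Group H]
    (θ : H ≃ ZMod N × ZMod N) (hθ : ∀ g h, θ (g * h) =
      ((θ g).1 + (s : ZMod N) ^ (θ g).2.val * (θ h).1, (θ g).2 + (θ h).2)) :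
    ∃ D' : Set H, IsPDS D' v k l μ ∧ (1 : H) ∉ D' ∧ D'⁻¹ = D' := by
  by_cases hpn : p = 2 ∧ n = 2
  · obtain ⟨rfl, rfl⟩ := hpn
    norm_num at hN hs
    subst hN hs
    exact four_case D v k l μ hD h1 hrev θ hθ
  · exact main_case p n N s hp hn hN hs hpn D v k l μ hD h1 hrev θ hθ

/-- If `C_{p^n} × C_{p^n}` contains a regular PDS, then the nonabelian group
`C_{p^n} ⋊_{p^(n-1)+1} C_{p^n}` (characterized by its presentation) contains a regular PDS
with the same parameters. -/
theorem regular_pds_transfer_semidirect (p n : ℕ) (hp : p.Prime) (hn : 2 ≤ n)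
    (D : Set (Multiplicative (ZMod (p ^ n) × ZMod (p ^ n)))) (v k l μ : ℕ)
    (hD : IsPDS D v k l μ) (h1 : (1 : Multiplicative (ZMod (p ^ n) × ZMod (p ^ n))) ∉ D)
    (hrev : D⁻¹ = D) :
    ∀ (H : Type*) [Group H] (a b : H),
      orderOf a = p ^ n → orderOf b = p ^ n →
      Subgroup.closure {a, b} = ⊤ →
      Subgroup.zpowers a ⊓ Subgroup.zpowers b = ⊥ →
      b⁻¹ * a * b = a ^ (p ^ (n - 1) + 1) →
      ∃ D' : Set H, IsPDS D' v k l μ ∧ (1 : H) ∉ D' ∧ D'⁻¹ = D' := by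
  intro H _ a b ha hb hgen hint hconj
  have : NeZero (p ^ n) := ⟨pow_ne_zero _ hp.ne_zero⟩
  obtain ⟨θ, hθ⟩ := exists_coords (p ^ n) (p ^ (n - 1) + 1) a b⁻¹ ha (by rw [orderOf_inv, hb])
    (by
      rw [eq_top_iff, ← hgen, Subgroup.closure_le]
      rintro x (rfl | rfl)
      · exact Subgroup.subset_closure (by simp)
      · have h : x⁻¹ ∈ Subgroup.closure {a, x⁻¹} := Subgroup.subset_closure (by simp)
        simpa using inv_mem h)
    (by rw [Subgroup.zpowers_inv]; exact hint) (by rw [inv_inv]; exact hconj)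
  exact transfer_all p n (p ^ n) (p ^ (n - 1) + 1) hp hn rfl rfl D v k l μ hD h1 hrev θ hθ
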